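/- Let r ≥ 2 and a ≥ 1 be fixed integers, let d > 0 be a fixed real number, and let 𝒯 be a Builder strategy tree with r colors on a board with a vertices that is legal for density restriction d. Then for every function N : ℕ → ℕ with n^{2−1/d} = o(N(n)) and N(n) ≤ n(n−1)/2 for all n, and for every sequence of online Painter strategies with r colors (one for each n), the probability that the r-edge-colored board G_{N(n)} of the online game on n vertices contains a copy (as an edge-colored graph) of some leaf of 𝒯 tends to 1 as n → ∞. -/

import Mathlib

open SimpleGraph Filter Asymptotics
open scoped Classical

/-- A history of the game: the sequence of edges presented so far, together with
the colors (elements of `Fin r`, representing the colors `1,…,r`) they received. -/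
abbrev EdgeHistory (V : Type) (r : ℕ) := List (Sym2 V × Fin r)

/-- A Painter strategy on vertex type `V` with `r` colors: a function assigning a color
to every pair (history, new edge). -/
abbrev PainterStrategy (V : Type) (r : ℕ) := EdgeHistory V r → Sym2 V → Fin r

/-- Auxiliary function: run a Painter strategy on a list of presented edges,
extending the given history. -/
def runPainterAux {V : Type} {r : ℕ} (π : PainterStrategy V r) :
    EdgeHistory V r → List (Sym2 V) → EdgeHistory V r
  | h, [] => h
  | h, e :: es => runPainterAux π (h ++ [(e, π h e)]) es

/-- The colored history obtained by coloring the edges of `l` successively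
according to the Painter strategy `π`. -/
def runPainter {V : Type} {r : ℕ} (π : PainterStrategy V r) (l : List (Sym2 V)) :
    EdgeHistory V r :=
  runPainterAux π [] l

/-- `G` contains a copy of `F`, i.e. a subgraph isomorphic to `F`. -/
def IsCopy {α β : Type} (F : SimpleGraph α) (G : SimpleGraph β) : Prop :=
  ∃ f : α ↪ β, ∀ u v : α, F.Adj u v → G.Adj (f u) (f v)

/-- The graph formed by the edges of color `c` in the history `h`. -/
def colorGraph {V : Type} {r : ℕ} (h : EdgeHistory V r) (c : Fin r) : SimpleGraph V :=
  SimpleGraph.fromEdgeSet {e | (e, c) ∈ h}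

/-- The history `h` contains a monochromatic copy of `F`. -/
def HasMonoCopy {α V : Type} {r : ℕ} (F : SimpleGraph α) (h : EdgeHistory V r) : Prop :=
  ∃ c : Fin r, IsCopy F (colorGraph h c)

/-- The number of edges of `G` lying entirely within the vertex set `S`. -/
noncomputable def edgesWithin {V : Type} (G : SimpleGraph V) (S : Set V) : ℕ :=
  (G.edgeSet ∩ {e | ∀ v ∈ e, v ∈ S}).ncard

/-- `m(G) ≤ d`: every subgraph `H` of `G` with at least one vertex satisfies `e_H ≤ d · v_H`. -/
def DensityLE {V : Type} (G : SimpleGraph V) (d : ℝ) : Prop :=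
  ∀ S : Finset V, S.Nonempty → (edgesWithin G (↑S : Set V) : ℝ) ≤ d * (S.card : ℝ)

/-- `G` contains no cycle and every connected component of `G` has at most `k` edges
(equivalently, `G` is acyclic and contains no connected subgraph with more than `k` edges). -/
def TreeSizeLE {V : Type} (G : SimpleGraph V) (k : ℕ) : Prop :=
  G.IsAcyclic ∧ ∀ S : Set V, (G.induce S).Connected → edgesWithin G S ≤ k

/-- A legal sequence of moves for Builder: distinct non-loop edges. -/
def ValidEdgeSeq {V : Type} (l : List (Sym2 V)) : Prop :=
  l.Nodup ∧ ∀ e ∈ l, ¬ e.IsDiag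

/-- The (uncolored) board formed by a list of edges. -/
def boardOf {V : Type} (l : List (Sym2 V)) : SimpleGraph V :=
  SimpleGraph.fromEdgeSet {e | e ∈ l}

/-- Builder has a winning strategy in the deterministic `F`-avoidance game with `r` colors
and density restriction `d`. -/
def BuilderWinsDensity {α : Type} (F : SimpleGraph α) (r : ℕ) (d : ℝ) : Prop :=
  ∃ a : ℕ, ∀ π : PainterStrategy (Fin a) r, ∃ l : List (Sym2 (Fin a)),
    ValidEdgeSeq l ∧ (∀ i : ℕ, DensityLE (boardOf (l.take i)) d) ∧
    HasMonoCopy F (runPainter π l)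

/-- Builder has a winning strategy in the deterministic `F`-avoidance game with `r` colors
and tree size restriction `k`. -/
def BuilderWinsTree {α : Type} (F : SimpleGraph α) (r k : ℕ) : Prop :=
  ∃ a : ℕ, ∀ π : PainterStrategy (Fin a) r, ∃ l : List (Sym2 (Fin a)),
    ValidEdgeSeq l ∧ (∀ i : ℕ, TreeSizeLE (boardOf (l.take i)) k) ∧
    HasMonoCopy F (runPainter π l)

/-- The Painter strategy `π` on `a` vertices never creates a monochromatic copy of `F`
against any Builder play obeying the tree size restriction `k`. -/
def PainterAvoidsTree {α : Type} (F : SimpleGraph α) (r k a : ℕ)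
    (π : PainterStrategy (Fin a) r) : Prop :=
  ∀ l : List (Sym2 (Fin a)), ValidEdgeSeq l →
    (∀ i : ℕ, TreeSizeLE (boardOf (l.take i)) k) →
    ¬ HasMonoCopy F (runPainter π l)

/-- Painter has a winning strategy in the deterministic `F`-avoidance game with `r` colors
and tree size restriction `k`. -/
def PainterWinsTree {α : Type} (F : SimpleGraph α) (r k : ℕ) : Prop :=
  ∀ a : ℕ, ∃ π : PainterStrategy (Fin a) r, PainterAvoidsTree F r k a π

/-- A sequence of `N` distinct non-loop edges on `n` vertices. -/
def ValidSeqFun {n N : ℕ} (f : Fin N → Sym2 (Fin n)) : Prop :=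
  Function.Injective f ∧ ∀ i, ¬ (f i).IsDiag

/-- The probability (with respect to the uniformly random order in which the `N` distinct
edges of the random process on `n` vertices appear) of the event `P`. -/
noncomputable def onlineProb (n N : ℕ) (P : (Fin N → Sym2 (Fin n)) → Prop) : ℝ :=
  (Set.ncard {f : Fin N → Sym2 (Fin n) | ValidSeqFun f ∧ P f} : ℝ) /
  (Set.ncard {f : Fin N → Sym2 (Fin n) | ValidSeqFun f} : ℝ)

/-- Event: playing the online strategy `π` on the random edge sequence `f` produces
a monochromatic copy of `F`. -/
def OnlineMonoCopy {α : Type} (F : SimpleGraph α) {r n N : ℕ}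
    (π : PainterStrategy (Fin n) r) (f : Fin N → Sym2 (Fin n)) : Prop :=
  HasMonoCopy F (runPainter π (List.ofFn f))

/-- A Builder strategy tree with `r` colors: at each non-leaf node Builder presents
an edge `e`, and the game continues in the child indexed by the color Painter chooses. -/
inductive BuilderTree (V : Type) (r : ℕ) : Type
  | leaf : BuilderTree V r
  | node (e : Sym2 V) (child : Fin r → BuilderTree V r) : BuilderTree V r

/-- The strategy tree is proper, relative to the list `used` of edges already on the board:
every presented edge is a non-loop vertex pair that is not yet an edge of the board. -/
def BuilderTree.Proper {V : Type} {r : ℕ} : BuilderTree V r → List (Sym2 V) → Prop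
  | .leaf, _ => True
  | .node e child, used => ¬ e.IsDiag ∧ e ∉ used ∧ ∀ c : Fin r, (child c).Proper (e :: used)

/-- The strategy tree is legal for density restriction `d`, relative to the set `cur` of
edges already on the board: the underlying uncolored graph of every node satisfies `m(B) ≤ d`. -/
def BuilderTree.LegalDensity {V : Type} {r : ℕ} (d : ℝ) :
    BuilderTree V r → Set (Sym2 V) → Prop
  | .leaf, _ => True
  | .node e child, cur =>
      DensityLE (SimpleGraph.fromEdgeSet (insert e cur)) d ∧
      ∀ c : Fin r, (child c).LegalDensity d (insert e cur)

/-- The colored histories (colored boards) corresponding to the nodes at depth `k` of the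
strategy tree. -/
def BuilderTree.nodeHistsAt {V : Type} {r : ℕ} :
    BuilderTree V r → ℕ → Set (EdgeHistory V r)
  | _, 0 => {[]}
  | .leaf, _ + 1 => ∅
  | .node e child, k + 1 =>
      ⋃ c : Fin r, (fun h => (e, c) :: h) '' ((child c).nodeHistsAt k)

/-- The colored histories (colored boards) corresponding to the leaves of the strategy tree. -/
def BuilderTree.leafHists {V : Type} {r : ℕ} : BuilderTree V r → Set (EdgeHistory V r)
  | .leaf => {[]}
  | .node e child => ⋃ c : Fin r, (fun h => (e, c) :: h) '' ((child c).leafHists)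

/-- The copies of the colored graph given by the history `B` (on `Fin a`) in the colored
graph given by the history `H` (on `Fin n`): injections preserving all edges together with
their colors. -/
def ColoredCopies {a n r : ℕ} (B : EdgeHistory (Fin a) r) (H : EdgeHistory (Fin n) r) :
    Set (Fin a ↪ Fin n) :=
  {f | ∀ c : Fin r, ∀ u v : Fin a,
    (colorGraph B c).Adj u v → (colorGraph H c).Adj (f u) (f v)}

/-- The colored history `H` contains a copy (as an edge-colored graph) of some leaf of `T`. -/
def HasLeafCopy {a n r : ℕ} (T : BuilderTree (Fin a) r) (H : EdgeHistory (Fin n) r) : Prop :=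
  ∃ B ∈ T.leafHists, (ColoredCopies B H).Nonempty

section Aux

noncomputable def Om (n N : ℕ) : Finset (Fin N → Sym2 (Fin n)) :=
  Finset.univ.filter (fun f => ValidSeqFun f)

noncomputable def fib {n N : ℕ} (P : Finset (Fin N)) (f0 : Fin N → Sym2 (Fin n)) :
    Finset (Fin N → Sym2 (Fin n)) :=
  (Om n N).filter (fun f => ∀ i ∈ P, f i = f0 i)

def bel (N s : ℕ) : Finset (Fin N) := Finset.univ.filter (fun i => i.val < s)

lemma mem_Om {n N : ℕ} {f : Fin N → Sym2 (Fin n)} : f ∈ Om n N ↔ ValidSeqFun f := by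
  simp [Om]

lemma mem_fib {n N : ℕ} {P : Finset (Fin N)} {f0 f : Fin N → Sym2 (Fin n)} :
    f ∈ fib P f0 ↔ ValidSeqFun f ∧ ∀ i ∈ P, f i = f0 i := by
  simp [fib, mem_Om]

lemma mem_bel {N s : ℕ} {i : Fin N} : i ∈ bel N s ↔ i.val < s := by simp [bel]

lemma card_bel {N s : ℕ} (h : s ≤ N) : (bel N s).card = s := by
  have : (bel N s).map Fin.valEmbedding = Finset.range s := by
    ext x
    simp only [Finset.mem_map, mem_bel, Fin.valEmbedding_apply, Finset.mem_range]
    constructor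
    · rintro ⟨i, hi, rfl⟩; exact hi
    · intro hx; exact ⟨⟨x, by omega⟩, hx, rfl⟩
  rw [← Finset.card_map, this, Finset.card_range]

lemma card_nondiag (n : ℕ) :
    (Finset.univ.filter (fun x : Sym2 (Fin n) => ¬ x.IsDiag)).card = n.choose 2 := by
  have := Sym2.card_subtype_not_diag (α := Fin n)
  rw [Fintype.card_fin] at this
  rw [← this, Fintype.card_subtype]

lemma isDiag_swap {n : ℕ} {x y z : Sym2 (Fin n)} (hx : ¬ x.IsDiag) (hy : ¬ y.IsDiag)
    (hz : ¬ z.IsDiag) : ¬ (Equiv.swap x y z).IsDiag := by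
  rw [Equiv.swap_apply_def]
  split_ifs <;> assumption

lemma card_swap_le {n N : ℕ} (P : Finset (Fin N)) (f0 : Fin N → Sym2 (Fin n)) (j : Fin N)
    (x y : Sym2 (Fin n)) (hx : ¬ x.IsDiag) (hy : ¬ y.IsDiag) (hxP : ∀ i ∈ P, f0 i ≠ x)
    (hyP : ∀ i ∈ P, f0 i ≠ y) :
    ((fib P f0).filter (fun f => f j = x)).card ≤ ((fib P f0).filter (fun f => f j = y)).card := by
  apply Finset.card_le_card_of_injOn (fun f i => Equiv.swap x y (f i))
  · intro f hf
    simp only [Finset.coe_filter, Set.mem_ofPred_eq, mem_fib] at hf ⊢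
    obtain ⟨⟨⟨h1, h2⟩, h3⟩, h4⟩ := hf
    refine ⟨⟨⟨?_, ?_⟩, ?_⟩, ?_⟩
    · exact (Equiv.swap x y).injective.comp h1
    · intro i; exact isDiag_swap hx hy (h2 i)
    · intro i hi
      rw [h3 i hi]
      exact Equiv.swap_apply_of_ne_of_ne (hxP i hi) (hyP i hi)
    · rw [h4, Equiv.swap_apply_left]
  · intro f _ g _ h
    funext i
    exact (Equiv.swap x y).injective (congrFun h i)

lemma cardA {n N : ℕ} (P : Finset (Fin N)) (f0 : Fin N → Sym2 (Fin n)) (hf0 : ValidSeqFun f0)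
    (j : Fin N) (hj : j ∉ P)
    (x : Sym2 (Fin n)) (hx : ¬ x.IsDiag) (hxP : ∀ i ∈ P, f0 i ≠ x) :
    (((fib P f0).filter (fun f => f j = x)).card : ℝ) * ((n.choose 2 : ℝ) - P.card)
      = (fib P f0).card := by
  set E := Finset.univ.filter (fun x : Sym2 (Fin n) => ¬ x.IsDiag) with hE
  set U := E \ P.image f0 with hU
  have hsub : P.image f0 ⊆ E := by
    intro y hy
    simp only [Finset.mem_image] at hy
    obtain ⟨i, _, rfl⟩ := hy
    simp [hE, hf0.2 i]
  have hUc : (U.card : ℝ) = (n.choose 2 : ℝ) - P.card := by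
    rw [hU, Finset.cast_card_sdiff hsub, Finset.card_image_of_injective _ hf0.1, hE,
      card_nondiag]
  have hmemU : ∀ y, y ∈ U ↔ ¬ y.IsDiag ∧ ∀ i ∈ P, f0 i ≠ y := by
    intro y; simp [hU, hE]
  have key : (fib P f0).card = ∑ y ∈ U, ((fib P f0).filter (fun f => f j = y)).card := by
    apply Finset.card_eq_sum_card_fiberwise
    intro f hf
    have hf' := mem_fib.1 hf
    apply (hmemU _).2
    refine ⟨hf'.1.2 j, ?_⟩
    intro i hi h
    rw [← hf'.2 i hi] at h
    exact hj (hf'.1.1 h ▸ hi)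
  rw [key, Finset.sum_congr rfl (g := fun _ => ((fib P f0).filter (fun f => f j = x)).card)]
  · rw [Finset.sum_const, ← hUc]; simp; ring
  · intro y hy
    have hy' := (hmemU y).1 hy
    exact le_antisymm (card_swap_le P f0 j y x hy'.1 hx hy'.2 hxP)
      (card_swap_le P f0 j x y hx hy'.1 hxP hy'.2)

lemma cardB {n N : ℕ} (P : Finset (Fin N)) (f0 : Fin N → Sym2 (Fin n)) (hf0 : ValidSeqFun f0)
    (j k : Fin N) (hj : j ∉ P) (hk : k ∉ P) (hjk : j ≠ k)
    (x y : Sym2 (Fin n)) (hx : ¬ x.IsDiag) (hxP : ∀ i ∈ P, f0 i ≠ x)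
    (hy : ¬ y.IsDiag) (hyP : ∀ i ∈ P, f0 i ≠ y) (hxy : x ≠ y) :
    (((fib P f0).filter (fun f => f j = x ∧ f k = y)).card : ℝ) *
      ((n.choose 2 : ℝ) - P.card) * ((n.choose 2 : ℝ) - P.card - 1)
      = (fib P f0).card := by
  rw [← cardA P f0 hf0 j hj x hx hxP]
  by_cases hne : ((fib P f0).filter (fun f => f j = x)).Nonempty
  · obtain ⟨f1, hf1⟩ := hne
    simp only [Finset.mem_filter, mem_fib] at hf1
    have e1 : (fib P f0).filter (fun f => f j = x) = fib (insert j P) f1 := by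
      ext f
      simp only [Finset.mem_filter, mem_fib, Finset.mem_insert, forall_eq_or_imp]
      constructor
      · rintro ⟨⟨h1, h2⟩, h3⟩
        exact ⟨h1, h3.trans hf1.2.symm, fun i hi => (h2 i hi).trans (hf1.1.2 i hi).symm⟩
      · rintro ⟨h1, h2, h3⟩
        exact ⟨⟨h1, fun i hi => (h3 i hi).trans (hf1.1.2 i hi)⟩, h2.trans hf1.2⟩
    have e2 : (fib P f0).filter (fun f => f j = x ∧ f k = y)
        = (fib (insert j P) f1).filter (fun f => f k = y) := by
      rw [← e1, Finset.filter_filter]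
    rw [e1, e2]
    have := cardA (insert j P) f1 hf1.1.1 k (by simp [hk, Ne.symm hjk]) y hy (by
      intro i hi
      rcases Finset.mem_insert.1 hi with rfl | hi
      · rw [hf1.2]; exact hxy
      · rw [hf1.1.2 i hi]; exact hyP i hi)
    rw [← this, Finset.card_insert_of_notMem hj]
    push_cast
    ring
  · rw [Finset.not_nonempty_iff_eq_empty] at hne
    have : (fib P f0).filter (fun f => f j = x ∧ f k = y) = ∅ := by
      rw [← Finset.filter_filter, hne]; simp
    rw [this, hne]; simp

noncomputable def Fw {n N : ℕ} (m s : ℕ) (x : Sym2 (Fin n)) (f : Fin N → Sym2 (Fin n)) : ℝ :=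
  if ∃ j, j.val < s ∧ f j = x then 1
  else if ∃ j, j.val < s + m ∧ f j = x then ((n.choose 2 : ℝ) - s) / m else 0

lemma Fw_congr {n N : ℕ} {m s : ℕ} (x : Sym2 (Fin n)) {f g : Fin N → Sym2 (Fin n)}
    (h : ∀ i ∈ bel N (s + m), f i = g i) : Fw m s x f = Fw m s x g := by
  have h1 : (∃ j, j.val < s ∧ f j = x) ↔ (∃ j, j.val < s ∧ g j = x) := by
    apply exists_congr; intro j
    apply and_congr_right; intro hj
    rw [h j (mem_bel.2 (by omega))]
  have h2 : (∃ j, j.val < s + m ∧ f j = x) ↔ (∃ j, j.val < s + m ∧ g j = x) := by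
    apply exists_congr; intro j
    apply and_congr_right; intro hj
    rw [h j (mem_bel.2 hj)]
  unfold Fw
  simp only [h1, h2]

lemma Fw_used {n N : ℕ} {m s : ℕ} {x : Sym2 (Fin n)} {f0 f : Fin N → Sym2 (Fin n)}
    (hf : f ∈ fib (bel N s) f0) (hu : ∃ j, j.val < s ∧ f0 j = x) : Fw m s x f = 1 := by
  obtain ⟨j, hj, hx⟩ := hu
  unfold Fw
  rw [if_pos ⟨j, hj, by rw [(mem_fib.1 hf).2 j (mem_bel.2 hj), hx]⟩]

lemma Fw_unused {n N : ℕ} {m s : ℕ} {x : Sym2 (Fin n)} {f0 f : Fin N → Sym2 (Fin n)}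
    (hf : f ∈ fib (bel N s) f0) (hu : ¬ ∃ j, j.val < s ∧ f0 j = x) :
    Fw m s x f = if ∃ j ∈ bel N (s + m) \ bel N s, f j = x
      then ((n.choose 2 : ℝ) - s) / m else 0 := by
  have h1 : ¬ ∃ j, j.val < s ∧ f j = x := by
    rintro ⟨j, hj, hx⟩
    exact hu ⟨j, hj, by rw [← (mem_fib.1 hf).2 j (mem_bel.2 hj), hx]⟩
  unfold Fw
  rw [if_neg h1]
  have : (∃ j, j.val < s + m ∧ f j = x) ↔ ∃ j ∈ bel N (s + m) \ bel N s, f j = x := by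
    apply exists_congr; intro j
    simp only [Finset.mem_sdiff, mem_bel]
    constructor
    · rintro ⟨h, h'⟩; exact ⟨⟨h, fun h2 => h1 ⟨j, h2, h'⟩⟩, h'⟩
    · rintro ⟨h, h'⟩; exact ⟨h.1, h'⟩
  simp only [this]

lemma card_block {N m s : ℕ} (h : s + m ≤ N) : (bel N (s + m) \ bel N s).card = m := by
  rw [Finset.card_sdiff_of_subset, card_bel h, card_bel (by omega)]
  · omega
  · intro i; simp only [mem_bel]; omega

lemma N_le {n N : ℕ} {f0 : Fin N → Sym2 (Fin n)} (hf0 : ValidSeqFun f0) : N ≤ n.choose 2 := by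
  rw [← card_nondiag, ← Fintype.card_fin N, ← Finset.card_univ,
    ← Finset.card_image_of_injective _ hf0.1]
  apply Finset.card_le_card
  intro y hy
  simp only [Finset.mem_image] at hy
  obtain ⟨i, _, rfl⟩ := hy
  simp [hf0.2 i]

lemma sumF {n N : ℕ} (m s : ℕ) (hm : 0 < m) (hs : s + m ≤ N) (x : Sym2 (Fin n))
    (hx : ¬ x.IsDiag) (f0 : Fin N → Sym2 (Fin n)) (hf0 : ValidSeqFun f0) :
    ∑ f ∈ fib (bel N s) f0, Fw m s x f = (fib (bel N s) f0).card := by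
  have hN := N_le hf0
  by_cases hu : ∃ j, j.val < s ∧ f0 j = x
  · rw [Finset.sum_congr rfl (fun f hf => Fw_used hf hu)]; simp
  · rw [Finset.sum_congr rfl (fun f hf => Fw_unused hf hu)]
    rw [← Finset.sum_filter, Finset.sum_const]
    have e : (fib (bel N s) f0).filter (fun f => ∃ j ∈ bel N (s + m) \ bel N s, f j = x)
        = (bel N (s + m) \ bel N s).biUnion
          (fun j => (fib (bel N s) f0).filter (fun f => f j = x)) := by
      ext f; simp only [Finset.mem_filter, Finset.mem_biUnion]; tauto
    rw [e, Finset.card_biUnion]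
    · have hpos : (0 : ℝ) < (n.choose 2 : ℝ) - s := by
        have : (s : ℝ) + m ≤ n.choose 2 := by exact_mod_cast hs.trans hN
        have : (0 : ℝ) < m := by exact_mod_cast hm
        linarith
      have hc : ∀ j ∈ bel N (s + m) \ bel N s,
          (((fib (bel N s) f0).filter (fun f => f j = x)).card : ℝ)
            = (fib (bel N s) f0).card / ((n.choose 2 : ℝ) - s) := by
        intro j hj
        rw [eq_div_iff hpos.ne']
        have := cardA (bel N s) f0 hf0 j (Finset.mem_sdiff.1 hj).2 x hx
          (fun i hi h => hu ⟨i, mem_bel.1 hi, h⟩)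
        rwa [card_bel (by omega)] at this
      rw [nsmul_eq_mul]
      push_cast
      rw [Finset.sum_congr rfl hc, Finset.sum_const, card_block hs]
      have : (m : ℝ) ≠ 0 := by positivity
      rw [nsmul_eq_mul]
      field_simp
    · intro i _ j _ hij
      rw [Function.onFun, Finset.disjoint_left]
      intro f h1 h2
      simp only [Finset.mem_filter, mem_fib] at h1 h2
      exact hij (h1.1.1.1 (h1.2.trans h2.2.symm))

lemma Fw_nonneg {n N : ℕ} {m s : ℕ} (x : Sym2 (Fin n)) (f : Fin N → Sym2 (Fin n))
    (h : s ≤ n.choose 2) : 0 ≤ Fw m s x f := by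
  have : (s : ℝ) ≤ n.choose 2 := by exact_mod_cast h
  unfold Fw
  split_ifs
  · exact zero_le_one
  · exact div_nonneg (by linarith) (by positivity)
  · exact le_rfl

lemma Fw_le {n N : ℕ} {m s : ℕ} (hm : 0 < m) (x : Sym2 (Fin n)) (f : Fin N → Sym2 (Fin n))
    (h : m ≤ n.choose 2) : Fw m s x f ≤ (n.choose 2 : ℝ) / m := by
  have hm' : (0 : ℝ) < m := by exact_mod_cast hm
  have : (m : ℝ) ≤ n.choose 2 := by exact_mod_cast h
  unfold Fw
  split_ifs
  · rw [le_div_iff₀ hm']; linarith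
  · gcongr
    have : (0 : ℝ) ≤ s := by positivity
    linarith
  · positivity

lemma sumF2_same {n N : ℕ} (m s : ℕ) (hm : 0 < m) (hs : s + m ≤ N) (x : Sym2 (Fin n))
    (hx : ¬ x.IsDiag) (f0 : Fin N → Sym2 (Fin n)) (hf0 : ValidSeqFun f0) :
    ∑ f ∈ fib (bel N s) f0, Fw m s x f * Fw m s x f
      ≤ ((n.choose 2 : ℝ) / m) * (fib (bel N s) f0).card := by
  have hN := N_le hf0
  rw [← sumF m s hm hs x hx f0 hf0, Finset.mul_sum]
  apply Finset.sum_le_sum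
  intro f _
  exact mul_le_mul_of_nonneg_right (Fw_le hm x f (by omega)) (Fw_nonneg x f (by omega))

lemma sumF2 {n N : ℕ} (m s : ℕ) (hm : 0 < m) (hs : s + m ≤ N) (x y : Sym2 (Fin n))
    (hx : ¬ x.IsDiag) (hy : ¬ y.IsDiag) (hxy : x ≠ y)
    (f0 : Fin N → Sym2 (Fin n)) (hf0 : ValidSeqFun f0) :
    ∑ f ∈ fib (bel N s) f0, Fw m s x f * Fw m s y f ≤ (fib (bel N s) f0).card := by
  have hN := N_le hf0
  by_cases hu : ∃ j, j.val < s ∧ f0 j = x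
  · rw [Finset.sum_congr rfl (fun f hf => by rw [Fw_used hf hu, one_mul])]
    exact (sumF m s hm hs y hy f0 hf0).le
  by_cases hv : ∃ j, j.val < s ∧ f0 j = y
  · rw [Finset.sum_congr rfl (fun f hf => by rw [Fw_used hf hv, mul_one])]
    exact (sumF m s hm hs x hx f0 hf0).le
  have hm' : (0 : ℝ) < m := by exact_mod_cast hm
  have hMs : (s : ℝ) + m ≤ n.choose 2 := by exact_mod_cast hs.trans hN
  set D : ℝ := (n.choose 2 : ℝ) - s with hD
  set Bl := bel N (s + m) \ bel N s with hBl
  set c : ℝ := ((fib (bel N s) f0).card : ℝ) with hc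
  have hc0 : 0 ≤ c := by positivity
  have e1 : ∀ f ∈ fib (bel N s) f0, Fw m s x f * Fw m s y f
      = if (∃ p ∈ Bl.offDiag, f p.1 = x ∧ f p.2 = y) then (D / m) ^ 2 else 0 := by
    intro f hf
    rw [Fw_unused hf hu, Fw_unused hf hv]
    have : (∃ p ∈ Bl.offDiag, f p.1 = x ∧ f p.2 = y) ↔
      (∃ j ∈ Bl, f j = x) ∧ (∃ j ∈ Bl, f j = y) := by
      constructor
      · rintro ⟨p, hp, h1, h2⟩
        rw [Finset.mem_offDiag] at hp
        exact ⟨⟨p.1, hp.1, h1⟩, ⟨p.2, hp.2.1, h2⟩⟩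
      · rintro ⟨⟨j, hj, h1⟩, ⟨k, hk, h2⟩⟩
        refine ⟨(j, k), ?_, h1, h2⟩
        rw [Finset.mem_offDiag]
        refine ⟨hj, hk, ?_⟩
        intro hjk
        change j = k at hjk
        rw [hjk] at h1
        exact hxy (h1.symm.trans h2)
    rw [if_congr this rfl rfl, ← hBl, ← hD]
    by_cases a1 : ∃ j ∈ Bl, f j = x
    · by_cases a2 : ∃ j ∈ Bl, f j = y
      · rw [if_pos a1, if_pos a2, if_pos ⟨a1, a2⟩, sq]
      · rw [if_neg a2, mul_zero, if_neg (fun h => a2 h.2)]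
    · rw [if_neg a1, zero_mul, if_neg (fun h => a1 h.1)]
  rw [Finset.sum_congr rfl e1, ← Finset.sum_filter, Finset.sum_const, nsmul_eq_mul]
  have e : (fib (bel N s) f0).filter (fun f => ∃ p ∈ Bl.offDiag, f p.1 = x ∧ f p.2 = y)
      = Bl.offDiag.biUnion
          (fun p => (fib (bel N s) f0).filter (fun f => f p.1 = x ∧ f p.2 = y)) := by
    ext f; simp only [Finset.mem_filter, Finset.mem_biUnion]; tauto
  rw [e]
  have hle : ((Bl.offDiag.biUnion
      (fun p => (fib (bel N s) f0).filter (fun f => f p.1 = x ∧ f p.2 = y))).card : ℝ)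
      ≤ ∑ p ∈ Bl.offDiag,
        (((fib (bel N s) f0).filter (fun f => f p.1 = x ∧ f p.2 = y)).card : ℝ) := by
    exact_mod_cast Finset.card_biUnion_le
  have hBc : Bl.card = m := card_block hs
  by_cases hm1 : m = 1
  · have : Bl.offDiag = ∅ := by
      rw [← Finset.card_eq_zero, Finset.offDiag_card, hBc, hm1]
    rw [this]; simpa using hc0
  have hm2 : (2 : ℝ) ≤ m := by exact_mod_cast (by omega : 2 ≤ m)
  have hD1 : 0 < D - 1 := by linarith
  have hDp : 0 < D := by linarith
  have hcc : ∀ p ∈ Bl.offDiag,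
      (((fib (bel N s) f0).filter (fun f => f p.1 = x ∧ f p.2 = y)).card : ℝ)
        = c / (D * (D - 1)) := by
    intro p hp
    rw [Finset.mem_offDiag] at hp
    rw [eq_div_iff (by positivity)]
    have := cardB (bel N s) f0 hf0 p.1 p.2 (Finset.mem_sdiff.1 hp.1).2
      (Finset.mem_sdiff.1 hp.2.1).2 hp.2.2 x y hx
      (fun i hi h => hu ⟨i, mem_bel.1 hi, h⟩) hy (fun i hi h => hv ⟨i, mem_bel.1 hi, h⟩) hxy
    rw [card_bel (by omega)] at this
    rw [← mul_assoc]; exact this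
  rw [Finset.sum_congr rfl hcc, Finset.sum_const, Finset.offDiag_card, hBc, nsmul_eq_mul,
    Nat.cast_sub (Nat.le_mul_self m)] at hle
  push_cast at hle
  calc _ ≤ ((m : ℝ) * m - m) * (c / (D * (D - 1))) * (D / m) ^ 2 := by
        apply mul_le_mul_of_nonneg_right hle (by positivity)
    _ = c * (((m : ℝ) - 1) * D / (m * (D - 1))) := by field_simp
    _ ≤ c * 1 := by
        apply mul_le_mul_of_nonneg_left _ hc0
        rw [div_le_one (by positivity)]
        nlinarith
    _ = c := mul_one c

lemma tower {n N : ℕ} {s s' : ℕ} (hss : s ≤ s') (A B : (Fin N → Sym2 (Fin n)) → ℝ)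
    (h : ∀ f1, ValidSeqFun f1 →
      ∑ f ∈ fib (bel N s') f1, A f ≤ ∑ f ∈ fib (bel N s') f1, B f)
    (f0 : Fin N → Sym2 (Fin n)) :
    ∑ f ∈ fib (bel N s) f0, A f ≤ ∑ f ∈ fib (bel N s) f0, B f := by
  let g : (Fin N → Sym2 (Fin n)) → (Fin N → Option (Sym2 (Fin n))) :=
    fun f i => if i.val < s' then some (f i) else none
  have hg : ∀ f1 f2, g f1 = g f2 ↔ ∀ i ∈ bel N s', f1 i = f2 i := by
    intro f1 f2
    constructor
    · intro h i hi
      have := congrFun h i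
      simpa [g, mem_bel.1 hi] using this
    · intro h
      funext i
      by_cases hi : i.val < s'
      · simp [g, hi, h i (mem_bel.2 hi)]
      · simp [g, hi]
  have hm : ∀ f ∈ fib (bel N s) f0, g f ∈ (fib (bel N s) f0).image g :=
    fun f hf => Finset.mem_image_of_mem _ hf
  rw [← Finset.sum_fiberwise_of_maps_to hm A, ← Finset.sum_fiberwise_of_maps_to hm B]
  apply Finset.sum_le_sum
  intro y hy
  obtain ⟨f1, hf1, rfl⟩ := Finset.mem_image.1 hy
  have hf1' := mem_fib.1 hf1
  have : (fib (bel N s) f0).filter (fun f => g f = g f1) = fib (bel N s') f1 := by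
    ext f
    simp only [Finset.mem_filter, mem_fib, hg]
    constructor
    · rintro ⟨⟨h1, _⟩, h3⟩; exact ⟨h1, h3⟩
    · rintro ⟨h1, h3⟩
      refine ⟨⟨h1, fun i hi => ?_⟩, h3⟩
      rw [h3 i (mem_bel.2 (by have := mem_bel.1 hi; omega)), hf1'.2 i hi]
  rw [this]
  exact h f1 hf1'.1

lemma runPainterAux_append {V : Type} {r : ℕ} (π : PainterStrategy V r) (l1 l2 : List (Sym2 V))
    (h : EdgeHistory V r) :
    runPainterAux π h (l1 ++ l2) = runPainterAux π (runPainterAux π h l1) l2 := by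
  induction l1 generalizing h with
  | nil => rfl
  | cons e es ih => exact ih _

lemma mem_runPainterAux {V : Type} {r : ℕ} (π : PainterStrategy V r) (l : List (Sym2 V))
    (h : EdgeHistory V r) (p : Sym2 V × Fin r) (hp : p ∈ h) : p ∈ runPainterAux π h l := by
  induction l generalizing h with
  | nil => exact hp
  | cons e es ih => exact ih _ (by simp [hp])

noncomputable def cl {n N r : ℕ} (π : PainterStrategy (Fin n) r) (f : Fin N → Sym2 (Fin n))
    (j : Fin N) : Fin r :=
  π (runPainter π ((List.ofFn f).take j)) (f j)

lemma mem_cl {n N r : ℕ} (π : PainterStrategy (Fin n) r) (f : Fin N → Sym2 (Fin n))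
    (j : Fin N) : (f j, cl π f j) ∈ runPainter π (List.ofFn f) := by
  have h1 : List.ofFn f = (List.ofFn f).take j ++ (f j :: (List.ofFn f).drop (j + 1)) := by
    conv_lhs => rw [← List.take_append_drop j (List.ofFn f)]
    rw [List.drop_eq_getElem_cons (by simp)]
    simp
  have h2 : ∀ l1 l2 : List (Sym2 (Fin n)),
      (f j, π (runPainter π l1) (f j)) ∈ runPainter π (l1 ++ f j :: l2) := by
    intro l1 l2
    unfold runPainter
    rw [runPainterAux_append, runPainterAux]
    apply mem_runPainterAux
    simp
  have h3 := h2 ((List.ofFn f).take j) ((List.ofFn f).drop (j + 1))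
  rw [← h1] at h3
  exact h3

lemma cl_congr {n N r : ℕ} (π : PainterStrategy (Fin n) r) {f g : Fin N → Sym2 (Fin n)}
    (j : Fin N) (h : ∀ i, i ≤ j → f i = g i) : cl π f j = cl π g j := by
  unfold cl
  rw [h j le_rfl]
  congr 2
  apply List.ext_getElem
  · simp
  · intro i h1 h2
    simp only [List.getElem_take, List.getElem_ofFn]
    apply h
    simp only [List.length_take, List.length_ofFn] at h1
    rw [Fin.le_def]
    simp
    omega

noncomputable def colOf {n N r : ℕ} (π : PainterStrategy (Fin n) r) (f : Fin N → Sym2 (Fin n))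
    (x : Sym2 (Fin n)) : Fin r :=
  if h : ∃ j, f j = x then cl π f h.choose else π [] x

lemma colOf_eq {n N r : ℕ} (π : PainterStrategy (Fin n) r) {f : Fin N → Sym2 (Fin n)}
    (hf : ValidSeqFun f) (j : Fin N) : colOf π f (f j) = cl π f j := by
  have h : ∃ i, f i = f j := ⟨j, rfl⟩
  unfold colOf
  rw [dif_pos h]
  have : h.choose = j := hf.1 h.choose_spec
  rw [this]

lemma mem_colOf {n N r : ℕ} (π : PainterStrategy (Fin n) r) {f : Fin N → Sym2 (Fin n)}
    (hf : ValidSeqFun f) {x : Sym2 (Fin n)} (h : ∃ j, f j = x) :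
    (x, colOf π f x) ∈ runPainter π (List.ofFn f) := by
  obtain ⟨j, rfl⟩ := h
  rw [colOf_eq π hf]
  exact mem_cl π f j

lemma exists_of_Fw {n N : ℕ} {m s : ℕ} {x : Sym2 (Fin n)} {f : Fin N → Sym2 (Fin n)}
    (h : Fw m s x f ≠ 0) : ∃ j, j.val < s + m ∧ f j = x := by
  by_contra hc
  apply h
  unfold Fw
  rw [if_neg hc, if_neg]
  rintro ⟨j, hj, hx⟩
  exact hc ⟨j, by omega, hx⟩

lemma colOf_congr {n N r : ℕ} (π : PainterStrategy (Fin n) r) {m s : ℕ} {x : Sym2 (Fin n)}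
    {f g : Fin N → Sym2 (Fin n)} (hg : ValidSeqFun g) (hf : f ∈ fib (bel N (s + m)) g)
    (h : Fw m s x g ≠ 0) : colOf π f x = colOf π g x := by
  obtain ⟨j, hj, rfl⟩ := exists_of_Fw h
  have hf' := mem_fib.1 hf
  rw [colOf_eq π hg, ← hf'.2 j (mem_bel.2 hj), colOf_eq π hf'.1]
  apply cl_congr
  intro i hi
  apply hf'.2 i (mem_bel.2 _)
  rw [Fin.le_def] at hi
  omega

def tdepth {V : Type} {r : ℕ} : BuilderTree V r → ℕ
  | .leaf => 0
  | .node _ ch => (Finset.univ.sup fun c => tdepth (ch c)) + 1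

lemma tdepth_child {V : Type} {r : ℕ} (e : Sym2 V) (ch : Fin r → BuilderTree V r) (c : Fin r) :
    tdepth (ch c) + 1 ≤ tdepth (.node e ch) := by
  have : tdepth (ch c) ≤ Finset.univ.sup fun c => tdepth (ch c) :=
    Finset.le_sup (f := fun c => tdepth (ch c)) (Finset.mem_univ c)
  simp only [tdepth]
  omega

lemma depth_step {V : Type} {r : ℕ} {e : Sym2 V} {ch : Fin r → BuilderTree V r} {m s N : ℕ}
    (h : s + m * tdepth (.node e ch) ≤ N) (c : Fin r) : s + m + m * tdepth (ch c) ≤ N := by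
  have := Nat.mul_le_mul_left m (tdepth_child e ch c)
  rw [Nat.mul_add] at this
  omega

noncomputable def Yw {n N a r : ℕ} (π : PainterStrategy (Fin n) r) (m : ℕ) (φ : Fin a ↪ Fin n) :
    BuilderTree (Fin a) r → ℕ → (Fin N → Sym2 (Fin n)) → ℝ
  | .leaf, _, _ => 1
  | .node e ch, s, f =>
      Fw m s (e.map φ) f * Yw π m φ (ch (colOf π f (e.map φ))) (s + m) f

lemma Yw_success {n N a r : ℕ} (π : PainterStrategy (Fin n) r) (m : ℕ) (φ : Fin a ↪ Fin n)
    {f : Fin N → Sym2 (Fin n)} (hf : ValidSeqFun f) (t : BuilderTree (Fin a) r) :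
    ∀ s, Yw π m φ t s f ≠ 0 → ∃ L ∈ t.leafHists, ∀ p ∈ L,
      (Sym2.map φ p.1, p.2) ∈ runPainter π (List.ofFn f) := by
  induction t with
  | leaf => intro s _; exact ⟨[], rfl, by simp⟩
  | node e ch ih =>
    intro s h
    simp only [Yw] at h
    obtain ⟨L, hL, hL2⟩ := ih _ _ (right_ne_zero_of_mul h)
    obtain ⟨j, _, hj⟩ := exists_of_Fw (left_ne_zero_of_mul h)
    refine ⟨(e, colOf π f (e.map φ)) :: L, ?_, ?_⟩
    · simp only [BuilderTree.leafHists, Set.mem_iUnion]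
      exact ⟨_, L, hL, rfl⟩
    · intro p hp
      rcases List.mem_cons.1 hp with rfl | hp
      · exact mem_colOf π hf ⟨j, hj⟩
      · exact hL2 p hp

lemma Yw_leafCopy {n N a r : ℕ} (π : PainterStrategy (Fin n) r) (m : ℕ) (φ : Fin a ↪ Fin n)
    {f : Fin N → Sym2 (Fin n)} (hf : ValidSeqFun f) (t : BuilderTree (Fin a) r) (s : ℕ)
    (h : Yw π m φ t s f ≠ 0) : HasLeafCopy t (runPainter π (List.ofFn f)) := by
  obtain ⟨L, hL, hL2⟩ := Yw_success π m φ hf t s h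
  refine ⟨L, hL, φ, ?_⟩
  intro c u v huv
  simp only [colorGraph, SimpleGraph.fromEdgeSet_adj, Set.mem_ofPred_eq] at huv ⊢
  refine ⟨?_, φ.injective.ne huv.2⟩
  have := hL2 _ huv.1
  simpa using this

lemma map_nondiag {n a : ℕ} (φ : Fin a ↪ Fin n) {e : Sym2 (Fin a)} (h : ¬ e.IsDiag) :
    ¬ (e.map φ).IsDiag := by
  induction e using Sym2.ind with
  | _ u v =>
    simp only [Sym2.map_mk, Sym2.mk_isDiag_iff] at h ⊢
    exact φ.injective.ne h

lemma first_moment {n N a r : ℕ} (π : PainterStrategy (Fin n) r) (m : ℕ) (hm : 0 < m)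
    (φ : Fin a ↪ Fin n) (t : BuilderTree (Fin a) r) :
    ∀ s used, t.Proper used → s + m * tdepth t ≤ N → ∀ f0 : Fin N → Sym2 (Fin n),
      ValidSeqFun f0 →
      ∑ f ∈ fib (bel N s) f0, Yw π m φ t s f = (fib (bel N s) f0).card := by
  induction t with
  | leaf => intro s used _ _ f0 _; simp [Yw]
  | node e ch ih =>
    intro s used hp hs f0 hf0
    simp only [BuilderTree.Proper] at hp
    have hs1 : s + m ≤ N := by
      have : m * 1 ≤ m * tdepth (.node e ch) := Nat.mul_le_mul_left m (by simp [tdepth])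
      omega
    rw [← sumF m s hm hs1 (e.map φ) (map_nondiag φ hp.1) f0 hf0]
    have key : ∀ f1, ValidSeqFun f1 → ∑ f ∈ fib (bel N (s + m)) f1, Yw π m φ (.node e ch) s f
        = ∑ f ∈ fib (bel N (s + m)) f1, Fw m s (e.map φ) f := by
      intro f1 hf1
      have hF : ∀ f ∈ fib (bel N (s + m)) f1, Fw m s (e.map φ) f = Fw m s (e.map φ) f1 :=
        fun f hf => Fw_congr _ (mem_fib.1 hf).2
      by_cases h0 : Fw m s (e.map φ) f1 = 0
      · apply Finset.sum_congr rfl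
        intro f hf
        simp only [Yw]
        rw [hF f hf, h0, zero_mul]
      · rw [Finset.sum_congr rfl hF, Finset.sum_congr rfl
          (g := fun f => Fw m s (e.map φ) f1 *
            Yw π m φ (ch (colOf π f1 (e.map φ))) (s + m) f)]
        · rw [← Finset.mul_sum, ih _ (s + m) _ (hp.2.2 _) (depth_step hs _) f1 hf1]
          simp [mul_comm]
        · intro f hf
          simp only [Yw]
          rw [hF f hf, colOf_congr π hf1 hf h0]
    exact le_antisymm (tower (Nat.le_add_right s m) _ _ (fun f1 h => (key f1 h).le) f0)
      (tower (Nat.le_add_right s m) _ _ (fun f1 h => (key f1 h).ge) f0)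

lemma ew_mono {a : ℕ} (S : Set (Fin a)) (e : Sym2 (Fin a)) (used : List (Sym2 (Fin a))) :
    edgesWithin (SimpleGraph.fromEdgeSet {x | x ∈ used}) S
      ≤ edgesWithin (SimpleGraph.fromEdgeSet {x | x ∈ e :: used}) S := by
  unfold edgesWithin
  apply Set.ncard_le_ncard _ (Set.toFinite _)
  intro x hx
  simp only [SimpleGraph.edgeSet_fromEdgeSet, Set.mem_inter_iff, Set.mem_sdiff,
    Set.mem_ofPred_eq, List.mem_cons] at hx ⊢
  tauto

lemma ew_succ {a : ℕ} (S : Set (Fin a)) (e : Sym2 (Fin a)) (used : List (Sym2 (Fin a)))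
    (h1 : ¬ e.IsDiag) (h2 : e ∉ used) (h3 : ∀ v ∈ e, v ∈ S) :
    edgesWithin (SimpleGraph.fromEdgeSet {x | x ∈ used}) S + 1
      ≤ edgesWithin (SimpleGraph.fromEdgeSet {x | x ∈ e :: used}) S := by
  unfold edgesWithin
  rw [← Set.ncard_insert_of_notMem (a := e) _ (Set.toFinite _)]
  · apply Set.ncard_le_ncard _ (Set.toFinite _)
    intro x hx
    rcases hx with rfl | hx
    · simp [h1]; exact h3
    · simp only [SimpleGraph.edgeSet_fromEdgeSet, Set.mem_inter_iff, Set.mem_sdiff,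
        Set.mem_ofPred_eq, List.mem_cons] at hx ⊢
      tauto
  · simp [h2]

lemma ew_le {a : ℕ} (G : SimpleGraph (Fin a)) (d : ℝ) (h : DensityLE G d) (S : Finset (Fin a)) :
    (edgesWithin G (↑S : Set (Fin a)) : ℝ) ≤ d * S.card := by
  by_cases hS : S.Nonempty
  · exact h S hS
  · rw [Finset.not_nonempty_iff_eq_empty] at hS
    subst hS
    have : edgesWithin G (↑(∅ : Finset (Fin a)) : Set (Fin a)) = 0 := by
      unfold edgesWithin
      rw [Set.ncard_eq_zero (Set.toFinite _)]
      ext x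
      induction x using Sym2.ind with
      | _ u v =>
        simp only [Set.mem_inter_iff, Set.mem_ofPred_eq, Set.mem_empty_iff_false, iff_false]
        rintro ⟨_, h⟩
        have := h u (Sym2.mem_mk_left u v)
        simp at this
    rw [this]; simp

lemma Yw_nonneg {n N a r : ℕ} (π : PainterStrategy (Fin n) r) (m : ℕ)
    (φ : Fin a ↪ Fin n) (hN : N ≤ n.choose 2) (f : Fin N → Sym2 (Fin n))
    (t : BuilderTree (Fin a) r) :
    ∀ s, s + m * tdepth t ≤ N → 0 ≤ Yw π m φ t s f := by
  induction t with
  | leaf => intro s _; simp [Yw]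
  | node e ch ih =>
    intro s hs
    simp only [Yw]
    exact mul_nonneg (Fw_nonneg _ _ (by omega)) (ih _ _ (depth_step hs _))

lemma second_moment {n N a r : ℕ} (π : PainterStrategy (Fin n) r) (m : ℕ) (hm : 0 < m)
    (hmN : m ≤ N) (d : ℝ) (φ ψ : Fin a ↪ Fin n) (S : Finset (Fin a))
    (hS : ∀ i, i ∈ S ↔ ∃ k, ψ k = φ i) (t : BuilderTree (Fin a) r) :
    ∀ (t' : BuilderTree (Fin a) r) s used used', t.Proper used → t'.Proper used' →
      t.LegalDensity d {x | x ∈ used} →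
      (edgesWithin (SimpleGraph.fromEdgeSet {x | x ∈ used}) (↑S : Set (Fin a)) : ℝ)
        ≤ d * S.card →
      s + m * tdepth t ≤ N → s + m * tdepth t' ≤ N →
      ∀ f0 : Fin N → Sym2 (Fin n), ValidSeqFun f0 →
      ∑ f ∈ fib (bel N s) f0, Yw π m φ t s f * Yw π m ψ t' s f
        ≤ (fib (bel N s) f0).card * ((n.choose 2 : ℝ) / m) ^ (d * S.card -
          edgesWithin (SimpleGraph.fromEdgeSet {x | x ∈ used}) (↑S : Set (Fin a))) := by
  have hQ : ∀ f0 : Fin N → Sym2 (Fin n), ValidSeqFun f0 → (1 : ℝ) ≤ (n.choose 2 : ℝ) / m := by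
    intro f0 hf0
    rw [le_div_iff₀ (by exact_mod_cast hm), one_mul]
    exact_mod_cast hmN.trans (N_le hf0)
  induction t with
  | leaf =>
    intro t' s used used' _ hp' _ hew _ hs' f0 hf0
    simp only [Yw, one_mul]
    rw [first_moment π m hm ψ t' s used' hp' hs' f0 hf0]
    apply le_mul_of_one_le_right (by positivity)
    exact Real.one_le_rpow (hQ f0 hf0) (by linarith)
  | node e ch ih =>
    intro t' s used used' hp hp' hl hew hs hs' f0 hf0
    cases t' with
    | leaf =>
      have := first_moment π m hm φ (.node e ch) s used hp hs f0 hf0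
      have h2 : ∀ f ∈ fib (bel N s) f0, Yw π m φ (.node e ch) s f * Yw π m ψ .leaf s f
          = Yw π m φ (.node e ch) s f := by
        intro f _; simp [Yw]
      rw [Finset.sum_congr rfl h2, this]
      apply le_mul_of_one_le_right (by positivity)
      exact Real.one_le_rpow (hQ f0 hf0) (by linarith)
    | node e' ch' =>
      simp only [BuilderTree.Proper] at hp hp'
      simp only [BuilderTree.LegalDensity] at hl
      have hins : insert e {x | x ∈ used} = {x | x ∈ e :: used} := by
        ext x; simp
      rw [hins] at hl
      have hs1 : s + m ≤ N := by
        have : m * 1 ≤ m * tdepth (.node e ch) := Nat.mul_le_mul_left m (by simp [tdepth])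
        omega
      have hN := N_le hf0
      set Q : ℝ := (n.choose 2 : ℝ) / m with hQd
      set w : ℝ := (edgesWithin (SimpleGraph.fromEdgeSet {x | x ∈ used}) (↑S : Set (Fin a)) : ℝ)
        with hw
      set w' : ℝ := (edgesWithin (SimpleGraph.fromEdgeSet {x | x ∈ e :: used}) (↑S : Set (Fin a)) : ℝ)
        with hw'
      have hww : w ≤ w' := by rw [hw, hw']; exact_mod_cast ew_mono _ e used
      have hw'S : w' ≤ d * S.card := ew_le _ d hl.1 S
      have hQ1 := hQ f0 hf0
      have step1 : ∑ f ∈ fib (bel N s) f0, Yw π m φ (.node e ch) s f * Yw π m ψ (.node e' ch') s f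
          ≤ ∑ f ∈ fib (bel N s) f0, Fw m s (e.map φ) f * Fw m s (e'.map ψ) f *
            Q ^ (d * S.card - w') := by
        apply tower (Nat.le_add_right s m)
        intro f1 hf1
        have hF : ∀ f ∈ fib (bel N (s + m)) f1, Fw m s (e.map φ) f = Fw m s (e.map φ) f1 :=
          fun f hf => Fw_congr _ (mem_fib.1 hf).2
        have hF' : ∀ f ∈ fib (bel N (s + m)) f1, Fw m s (e'.map ψ) f = Fw m s (e'.map ψ) f1 :=
          fun f hf => Fw_congr _ (mem_fib.1 hf).2
        by_cases h0 : Fw m s (e.map φ) f1 = 0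
        · apply le_of_eq
          apply Finset.sum_congr rfl
          intro f hf
          simp only [Yw]
          rw [hF f hf, h0]; ring
        by_cases h0' : Fw m s (e'.map ψ) f1 = 0
        · apply le_of_eq
          apply Finset.sum_congr rfl
          intro f hf
          simp only [Yw]
          rw [hF' f hf, h0']; ring
        have hA : ∀ f ∈ fib (bel N (s + m)) f1,
            Yw π m φ (.node e ch) s f * Yw π m ψ (.node e' ch') s f
            = (Fw m s (e.map φ) f1 * Fw m s (e'.map ψ) f1) *
              (Yw π m φ (ch (colOf π f1 (e.map φ))) (s + m) f *
               Yw π m ψ (ch' (colOf π f1 (e'.map ψ))) (s + m) f) := by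
          intro f hf
          simp only [Yw]
          rw [hF f hf, hF' f hf, colOf_congr π hf1 hf h0, colOf_congr π hf1 hf h0']
          ring
        have hB : ∀ f ∈ fib (bel N (s + m)) f1,
            Fw m s (e.map φ) f * Fw m s (e'.map ψ) f * Q ^ (d * S.card - w')
            = Fw m s (e.map φ) f1 * Fw m s (e'.map ψ) f1 * Q ^ (d * S.card - w') := by
          intro f hf
          rw [hF f hf, hF' f hf]
        rw [Finset.sum_congr rfl hA, Finset.sum_congr rfl hB, ← Finset.mul_sum, Finset.sum_const,
          nsmul_eq_mul]
        have := ih _ _ (s + m) (e :: used) (e' :: used') (hp.2.2 _) (hp'.2.2 _) (hl.2 _) hw'S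
          (depth_step hs (colOf π f1 (e.map φ))) (depth_step hs' (colOf π f1 (e'.map ψ))) f1 hf1
        calc _ ≤ _ := mul_le_mul_of_nonneg_left this
              (mul_nonneg (Fw_nonneg _ _ (by omega)) (Fw_nonneg _ _ (by omega)))
          _ = _ := by rw [← hw']; ring
      refine step1.trans ?_
      rw [← Finset.sum_mul]
      by_cases hee : e.map φ = e'.map ψ
      · rw [← hee]
        have h3 : ∀ v ∈ e, v ∈ (↑S : Set (Fin a)) := by
          intro v hv
          have : φ v ∈ e'.map ψ := by rw [← hee]; exact Sym2.mem_map.2 ⟨v, hv, rfl⟩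
          obtain ⟨k, _, hk⟩ := Sym2.mem_map.1 this
          exact (hS v).2 ⟨k, hk⟩
        have hw1 : w + 1 ≤ w' := by
          rw [hw, hw']; exact_mod_cast ew_succ _ e used hp.1 hp.2.1 h3
        have := sumF2_same m s hm hs1 (e.map φ) (map_nondiag φ hp.1) f0 hf0
        calc _ ≤ (Q * (fib (bel N s) f0).card) * Q ^ (d * S.card - w') :=
              mul_le_mul_of_nonneg_right this (by positivity)
          _ = (fib (bel N s) f0).card * Q ^ (d * S.card - w' + 1) := by
              rw [Real.rpow_add_one (by linarith)]; ring
          _ ≤ _ := by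
              apply mul_le_mul_of_nonneg_left _ (by positivity)
              exact Real.rpow_le_rpow_of_exponent_le hQ1 (by linarith)
      · have := sumF2 m s hm hs1 (e.map φ) (e'.map ψ) (map_nondiag φ hp.1)
          (map_nondiag ψ hp'.1) hee f0 hf0
        calc _ ≤ ((fib (bel N s) f0).card : ℝ) * Q ^ (d * S.card - w') :=
              mul_le_mul_of_nonneg_right this (by positivity)
          _ ≤ _ := by
              apply mul_le_mul_of_nonneg_left _ (by positivity)
              exact Real.rpow_le_rpow_of_exponent_le hQ1 (by linarith)

lemma exists_valid {n N : ℕ} (h : N ≤ n.choose 2) : ∃ f : Fin N → Sym2 (Fin n), ValidSeqFun f := by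
  have hc : Fintype.card (Fin N) ≤ Fintype.card {x : Sym2 (Fin n) // ¬ x.IsDiag} := by
    rw [Sym2.card_subtype_not_diag]; simpa using h
  obtain ⟨g⟩ := Function.Embedding.nonempty_of_card_le hc
  exact ⟨fun i => (g i).1, fun i j hij => g.injective (Subtype.ext hij), fun i => (g i).2⟩

lemma onlineProb_eq (n N : ℕ) (P : (Fin N → Sym2 (Fin n)) → Prop) :
    onlineProb n N P = (((Om n N).filter P).card : ℝ) / (Om n N).card := by
  unfold onlineProb
  have e1 : {f : Fin N → Sym2 (Fin n) | ValidSeqFun f ∧ P f} = ↑((Om n N).filter P) := by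
    ext f; simp [mem_Om]
  have e2 : {f : Fin N → Sym2 (Fin n) | ValidSeqFun f} = ↑(Om n N) := by
    ext f; simp [mem_Om]
  rw [e1, e2, Set.ncard_coe_finset, Set.ncard_coe_finset]

lemma onlineProb_le_one (n N : ℕ) (P : (Fin N → Sym2 (Fin n)) → Prop) :
    onlineProb n N P ≤ 1 := by
  rw [onlineProb_eq]
  apply div_le_one_of_le₀ _ (by positivity)
  exact_mod_cast Finset.card_filter_le _ _

lemma sum_pairs {n a : ℕ} (lam : ℝ) (hl : 0 ≤ lam) (ψ : Fin a ↪ Fin n) :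
    ∑ φ : Fin a ↪ Fin n, lam ^ (Finset.univ.filter (fun i => ∃ k, ψ k = φ i)).card
      ≤ ((n : ℝ) + a * lam) ^ a := by
  let w : Fin n → ℝ := fun x => if ∃ k, ψ k = x then lam else 1
  have hw : ∀ x, 0 ≤ w x := by
    intro x; simp only [w]; split_ifs <;> linarith
  have h1 : ∀ φ : Fin a ↪ Fin n, lam ^ (Finset.univ.filter (fun i => ∃ k, ψ k = φ i)).card
      = ∏ i, w (φ i) := by
    intro φ
    rw [← Finset.prod_const, Finset.prod_filter]
  rw [Finset.sum_congr rfl (fun φ _ => h1 φ)]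
  have h2 : ∑ φ : Fin a ↪ Fin n, ∏ i, w (φ i) ≤ ∑ g : Fin a → Fin n, ∏ i, w (g i) := by
    rw [← Finset.sum_image (s := Finset.univ) (g := fun φ : Fin a ↪ Fin n => (φ : Fin a → Fin n))
      (f := fun g : Fin a → Fin n => ∏ i, w (g i)) (fun x _ y _ h => DFunLike.coe_injective h)]
    apply Finset.sum_le_sum_of_subset_of_nonneg (Finset.subset_univ _)
    intro g _ _
    exact Finset.prod_nonneg fun i _ => hw _
  refine h2.trans ?_
  rw [← Fintype.sum_pow]
  apply pow_le_pow_left₀ (Finset.sum_nonneg fun i _ => hw i)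
  have h3 : ∀ x ∈ (Finset.univ : Finset (Fin n)),
      w x ≤ 1 + (if x ∈ Finset.univ.image ψ then lam else 0) := by
    intro x _
    simp only [w, Finset.mem_image, Finset.mem_univ, true_and]
    split_ifs <;> linarith
  refine (Finset.sum_le_sum h3).trans ?_
  rw [Finset.sum_add_distrib, ← Finset.sum_filter]
  have : (Finset.univ.filter (fun x => x ∈ Finset.univ.image ψ)).card = a := by
    rw [Finset.filter_univ_mem, Finset.card_image_of_injective _ ψ.injective]; simp
  rw [Finset.sum_const, Finset.sum_const, this]
  simp

lemma prob_lower {n N a r : ℕ} (π : PainterStrategy (Fin n) r) (m : ℕ) (hm : 0 < m)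
    (hmN : m ≤ N) (hN : N ≤ n.choose 2) (d : ℝ) (hd : 0 < d) (T : BuilderTree (Fin a) r)
    (hTp : T.Proper []) (hTd : T.LegalDensity d ∅) (hdep : m * tdepth T ≤ N) (hn : 0 < n) :
    (n.descFactorial a : ℝ) / ((n : ℝ) + a * ((n.choose 2 : ℝ) / m) ^ d) ^ a
      ≤ onlineProb n N (fun f => HasLeafCopy T (runPainter π (List.ofFn f))) := by
  obtain ⟨f0, hf0⟩ := exists_valid hN
  have hOm : fib (bel N 0) f0 = Om n N := by
    ext f; simp [mem_fib, mem_Om, mem_bel]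
  set Q : ℝ := (n.choose 2 : ℝ) / m with hQ
  have hQ0 : 0 ≤ Q := by positivity
  set lam : ℝ := Q ^ d with hlam
  have hl0 : 0 ≤ lam := by positivity
  set D : ℝ := (n.descFactorial a : ℝ) with hD
  have hDcard : ((Finset.univ : Finset (Fin a ↪ Fin n)).card : ℝ) = D := by
    rw [Finset.card_univ, Fintype.card_embedding_eq]; simp [hD]
  set C : ℝ := ((Om n N).card : ℝ) with hC
  have hCpos : 0 < C := by
    rw [hC]; exact_mod_cast Finset.card_pos.2 ⟨f0, mem_Om.2 hf0⟩
  let Y : (Fin a ↪ Fin n) → (Fin N → Sym2 (Fin n)) → ℝ := fun φ f => Yw π m φ T 0 f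
  let X : (Fin N → Sym2 (Fin n)) → ℝ := fun f => ∑ φ, Y φ f
  let P : (Fin N → Sym2 (Fin n)) → Prop := fun f => HasLeafCopy T (runPainter π (List.ofFn f))
  have hX1 : ∑ f ∈ Om n N, X f = D * C := by
    simp only [X]
    rw [Finset.sum_comm, Finset.sum_congr rfl (g := fun _ => C), Finset.sum_const, nsmul_eq_mul,
      hDcard]
    intro φ _
    have := first_moment π m hm φ T 0 [] hTp (by omega) f0 hf0
    rwa [hOm] at this
  have hX2 : ∑ f ∈ Om n N, X f ^ 2 ≤ C * (D * ((n : ℝ) + a * lam) ^ a) := by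
    have e : ∀ f ∈ Om n N, X f ^ 2 = ∑ ψ, ∑ φ, Y φ f * Y ψ f := by
      intro f _
      simp only [X]
      rw [sq, Finset.sum_mul_sum, Finset.sum_comm]
    rw [Finset.sum_congr rfl e, Finset.sum_comm]
    have b : ∀ ψ ∈ (Finset.univ : Finset (Fin a ↪ Fin n)),
        ∑ f ∈ Om n N, ∑ φ, Y φ f * Y ψ f ≤ C * ((n : ℝ) + a * lam) ^ a := by
      intro ψ _
      rw [Finset.sum_comm]
      refine le_trans ?_ (mul_le_mul_of_nonneg_left (sum_pairs lam hl0 ψ) hCpos.le)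
      rw [Finset.mul_sum]
      apply Finset.sum_le_sum
      intro φ _
      have e0 : (edgesWithin (SimpleGraph.fromEdgeSet {x : Sym2 (Fin a) | x ∈ []})
          (↑(Finset.univ.filter (fun i => ∃ k, ψ k = φ i)) : Set (Fin a))) = 0 := by
        simp [edgesWithin]
      have := second_moment π m hm hmN d φ ψ (Finset.univ.filter (fun i => ∃ k, ψ k = φ i))
        (by simp) T T 0 [] [] hTp hTp (by simpa using hTd)
        (by rw [e0]; simp; positivity) (by omega) (by omega) f0 hf0
      rw [hOm, e0, Nat.cast_zero, sub_zero, Real.rpow_mul hQ0, Real.rpow_natCast] at this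
      exact this
    refine (Finset.sum_le_sum b).trans ?_
    rw [Finset.sum_const, nsmul_eq_mul, hDcard]
    apply le_of_eq; ring
  have hsupp : ∑ f ∈ (Om n N).filter P, X f = ∑ f ∈ Om n N, X f := by
    apply Finset.sum_subset (Finset.filter_subset _ _)
    intro f hf hf2
    simp only [X]
    apply Finset.sum_eq_zero
    intro φ _
    by_contra hne
    exact hf2 (Finset.mem_filter.2 ⟨hf, Yw_leafCopy π m φ (mem_Om.1 hf) T 0 hne⟩)
  have hCS : (D * C) ^ 2 ≤ (((Om n N).filter P).card : ℝ) * (C * (D * ((n : ℝ) + a * lam) ^ a)) := by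
    rw [← hX1, ← hsupp]
    refine (sq_sum_le_card_mul_sum_sq).trans ?_
    apply mul_le_mul_of_nonneg_left _ (by positivity)
    refine le_trans ?_ hX2
    exact Finset.sum_le_sum_of_subset_of_nonneg (Finset.filter_subset _ _)
      (fun f _ _ => sq_nonneg _)
  rw [onlineProb_eq]
  have hR : 0 < ((n : ℝ) + a * lam) ^ a := by positivity
  rw [div_le_div_iff₀ hR hCpos]
  have hD0 : 0 ≤ D := by positivity
  rcases hD0.eq_or_lt with h | h
  · rw [← h, zero_mul]; positivity
  · have : (D * C) * (D * C) ≤ (D * C) * ((((Om n N).filter P).card : ℝ) * ((n : ℝ) + a * lam) ^ a) := by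
      calc _ = (D * C) ^ 2 := by ring
        _ ≤ _ := hCS
        _ = _ := by ring
    exact le_of_mul_le_mul_left this (by positivity)

lemma half_le {a : ℕ} (d : ℝ) (e : Sym2 (Fin a)) (he : ¬ e.IsDiag)
    (h : DensityLE (SimpleGraph.fromEdgeSet (insert e ∅)) d) : 1 / 2 ≤ d := by
  induction e using Sym2.ind with
  | _ u v =>
    have huv : u ≠ v := by simpa using he
    have := h {u, v} (by simp)
    rw [Finset.card_pair huv] at this
    have h1 : 1 ≤ edgesWithin (SimpleGraph.fromEdgeSet (insert s(u, v) ∅))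
        (↑({u, v} : Finset (Fin a)) : Set (Fin a)) := by
      unfold edgesWithin
      rw [Nat.one_le_iff_ne_zero, ← Nat.pos_iff_ne_zero, Set.ncard_pos (Set.toFinite _)]
      exact ⟨s(u, v), by simp [huv]⟩
    have h1' : (1 : ℝ) ≤ edgesWithin (SimpleGraph.fromEdgeSet (insert s(u, v) ∅))
        (↑({u, v} : Finset (Fin a)) : Set (Fin a)) := by exact_mod_cast h1
    push_cast at this h1'
    linarith

lemma tendsto_desc (a : ℕ) :
    Tendsto (fun n : ℕ => (n.descFactorial a : ℝ) / (n : ℝ) ^ a) atTop (nhds 1) := by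
  induction a with
  | zero => simp
  | succ k ih =>
    have h1 : Tendsto (fun n : ℕ => ((n - k : ℕ) : ℝ) / n) atTop (nhds 1) := by
      have : Tendsto (fun n : ℕ => 1 - (k : ℝ) / n) atTop (nhds (1 - 0)) :=
        tendsto_const_nhds.sub (tendsto_const_div_atTop_nhds_zero_nat _)
      rw [sub_zero] at this
      apply this.congr'
      filter_upwards [eventually_ge_atTop (k + 1)] with n hn
      have : (n : ℝ) ≠ 0 := by
        have : 0 < n := by omega
        positivity
      rw [Nat.cast_sub (by omega)]
      field_simp
    have := h1.mul ih
    rw [one_mul] at this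
    apply this.congr
    intro n
    rw [Nat.descFactorial_succ, pow_succ]
    push_cast
    rw [div_mul_div_comm, mul_comm ((n : ℝ) ^ k)]

lemma main_tendsto (r a : ℕ) (d : ℝ) (hd : 0 < d)
    (T : BuilderTree (Fin a) r) (hTp : T.Proper []) (hTd : T.LegalDensity d ∅)
    (hdh : 1 / 2 ≤ d)
    (N : ℕ → ℕ)
    (hN : (fun n : ℕ => (n : ℝ) ^ ((2 : ℝ) - 1 / d)) =o[atTop] (fun n : ℕ => (N n : ℝ)))
    (hNle : ∀ n : ℕ, N n ≤ n * (n - 1) / 2)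
    (π : (n : ℕ) → PainterStrategy (Fin n) r) :
    Tendsto (fun n : ℕ => onlineProb n (N n)
        (fun f => HasLeafCopy T (runPainter (π n) (List.ofFn f))))
      atTop (nhds 1) := by
  set K := tdepth T + 1 with hK
  have hKpos : 0 < K := by omega
  have hexp : 0 ≤ (2 : ℝ) - 1 / d := by
    have : 1 / d ≤ 2 := by rw [div_le_iff₀ hd]; linarith
    linarith
  have hNK : ∀ᶠ n : ℕ in atTop, K ≤ N n := by
    have := hN.bound (c := 1 / K) (by positivity)
    filter_upwards [this, eventually_ge_atTop 1] with n hn hn1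
    have h1 : (1 : ℝ) ≤ (n : ℝ) ^ ((2 : ℝ) - 1 / d) :=
      Real.one_le_rpow (by exact_mod_cast hn1) hexp
    rw [Real.norm_of_nonneg (by linarith), Real.norm_of_nonneg (by positivity)] at hn
    have h2 : (1 : ℝ) ≤ 1 / K * N n := h1.trans hn
    rw [one_div, ← div_eq_inv_mul, le_div_iff₀ (by positivity)] at h2
    exact_mod_cast (by linarith : (K : ℝ) ≤ N n)
  let m : ℕ → ℕ := fun n => N n / K
  let lam : ℕ → ℝ := fun n => ((n.choose 2 : ℝ) / m n) ^ d
  have hlam : Tendsto (fun n : ℕ => lam n / n) atTop (nhds 0) := by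
    have h0 : Tendsto (fun n : ℕ => (n : ℝ) ^ ((2 : ℝ) - 1 / d) / (N n : ℝ)) atTop (nhds 0) :=
      hN.tendsto_div_nhds_zero
    have h1 : Tendsto (fun n : ℕ => (2 * K * ((n : ℝ) ^ ((2 : ℝ) - 1 / d) / (N n : ℝ))) ^ d)
        atTop (nhds 0) := by
      have := (h0.const_mul (2 * K : ℝ)).rpow_const (p := d) (Or.inr hd.le)
      rwa [mul_zero, Real.zero_rpow hd.ne'] at this
    refine squeeze_zero' ?_ ?_ h1
    · filter_upwards with n
      positivity
    · filter_upwards [hNK, eventually_ge_atTop 1] with n hn hn1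
      have hn0 : (0 : ℝ) < n := by exact_mod_cast hn1
      have hm1 : 1 ≤ m n := (Nat.one_le_div_iff hKpos).2 hn
      have hm2 : (N n : ℝ) ≤ 2 * K * m n := by
        have h := Nat.lt_div_mul_add (a := N n) hKpos
        have h' : N n ≤ m n * K + K := h.le
        have h'' : K ≤ m n * K := Nat.le_mul_of_pos_left K hm1
        have : N n ≤ 2 * K * m n := by nlinarith
        exact_mod_cast this
      have hNp : (0 : ℝ) < N n := by exact_mod_cast (by omega : 0 < N n)
      have hmp : (0 : ℝ) < m n := by exact_mod_cast hm1
      have hch : (n.choose 2 : ℝ) ≤ (n : ℝ) ^ 2 := by exact_mod_cast Nat.choose_le_pow n 2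
      have hQ : (n.choose 2 : ℝ) / m n ≤ 2 * K * ((n : ℝ) ^ 2 / N n) := by
        rw [div_le_iff₀ hmp]
        calc (n.choose 2 : ℝ) ≤ (n : ℝ) ^ 2 := hch
          _ = (n : ℝ) ^ 2 / N n * N n := by field_simp
          _ ≤ (n : ℝ) ^ 2 / N n * (2 * K * m n) := by gcongr
          _ = _ := by ring
      have hr1 : (2 * K * ((n : ℝ) ^ ((2 : ℝ) - 1 / d) / (N n : ℝ))) ^ d
          = (2 * K * ((n : ℝ) ^ 2 / N n)) ^ d / n := by
        have e1 : 2 * K * ((n : ℝ) ^ ((2 : ℝ) - 1 / d) / (N n : ℝ))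
            = (2 * K * ((n : ℝ) ^ 2 / N n)) * (n : ℝ) ^ (-(1 / d)) := by
          rw [sub_eq_add_neg, Real.rpow_add hn0, Real.rpow_two]; ring
        rw [e1, Real.mul_rpow (by positivity) (by positivity), ← Real.rpow_mul hn0.le]
        have : -(1 / d) * d = -1 := by field_simp
        rw [this, Real.rpow_neg_one, ← div_eq_mul_inv]
      rw [hr1]
      simp only [lam]
      gcongr
  have hlow : Tendsto (fun n : ℕ => (n.descFactorial a : ℝ) / ((n : ℝ) + a * lam n) ^ a)
      atTop (nhds 1) := by
    have h1 : Tendsto (fun n : ℕ => ((n.descFactorial a : ℝ) / (n : ℝ) ^ a) /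
        (1 + a * (lam n / n)) ^ a) atTop (nhds (1 / (1 + a * 0) ^ a)) :=
      (tendsto_desc a).div ((tendsto_const_nhds.add (hlam.const_mul (a : ℝ))).pow a) (by simp)
    simp only [mul_zero, add_zero, one_pow, div_one] at h1
    apply h1.congr'
    filter_upwards [eventually_ge_atTop 1] with n hn1
    have hn0 : (0 : ℝ) < n := by exact_mod_cast hn1
    rw [div_div, ← mul_pow]
    congr 2
    field_simp
  refine tendsto_of_tendsto_of_tendsto_of_le_of_le' hlow tendsto_const_nhds ?_ ?_
  · filter_upwards [hNK, eventually_ge_atTop 1] with n hn hn1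
    have hm1 : 1 ≤ m n := (Nat.one_le_div_iff hKpos).2 hn
    have hmK : m n * K ≤ N n := Nat.div_mul_le_self _ _
    apply prob_lower (π n) (m n) hm1 (Nat.div_le_self _ _) _ d hd T hTp hTd _ hn1
    · rw [Nat.choose_two_right]; exact hNle n
    · rw [hK, Nat.mul_add] at hmK; omega
  · filter_upwards with n
    exact onlineProb_le_one _ _ _

end Aux

/-- Lemma 7 of the paper. Let `𝒯` be a Builder strategy tree with `r ≥ 2`
colors on a board with `a ≥ 1` vertices that is legal for density restriction `d > 0`. If
`n^(2-1/d) = o(N(n))` and `N(n) ≤ n(n-1)/2`, then for any sequence of online Painter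
strategies, a.a.s. the colored board after `N(n)` steps contains a copy of a leaf of `𝒯`. -/
theorem statement3 (r a : ℕ) (hr : 2 ≤ r) (ha : 1 ≤ a) (d : ℝ) (hd : 0 < d)
    (T : BuilderTree (Fin a) r) (hTp : T.Proper []) (hTd : T.LegalDensity d ∅)
    (N : ℕ → ℕ)
    (hN : (fun n : ℕ => (n : ℝ) ^ ((2 : ℝ) - 1 / d)) =o[atTop] (fun n : ℕ => (N n : ℝ)))
    (hNle : ∀ n : ℕ, N n ≤ n * (n - 1) / 2)
    (π : (n : ℕ) → PainterStrategy (Fin n) r) :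
    Tendsto (fun n : ℕ => onlineProb n (N n)
        (fun f => HasLeafCopy T (runPainter (π n) (List.ofFn f))))
      atTop (nhds 1) := by
  cases T with
  | leaf =>
    apply tendsto_const_nhds.congr'
    filter_upwards [eventually_ge_atTop a] with n hn
    obtain ⟨f0, hf0⟩ := exists_valid (n := n) (N := N n)
      (by rw [Nat.choose_two_right]; exact hNle n)
    have hP : ∀ f ∈ Om n (N n),
        HasLeafCopy (BuilderTree.leaf : BuilderTree (Fin a) r)
          (runPainter (π n) (List.ofFn f)) := by
      intro f _
      refine ⟨[], rfl, Fin.castLEEmb hn, ?_⟩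
      intro c u v h
      simp [colorGraph] at h
    rw [onlineProb_eq, Finset.filter_true_of_mem hP, div_self]
    have : 0 < (Om n (N n)).card := Finset.card_pos.2 ⟨f0, mem_Om.2 hf0⟩
    positivity
  | node e ch =>
    refine main_tendsto r a d hd _ hTp hTd ?_ N hN hNle π
    exact half_le d e hTp.1 hTd.1
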